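/- For any integer n ≥ 4, n(US_n) = 2^{n-1} + 2^{n-2} + n + 1 and this is at least n^2 + 1 = n(C_n). -/

import Mathlib

open SimpleGraph

/-- A subtree of `G` is a nonempty connected acyclic subgraph of `G`. -/
def IsSubtree {V : Type*} {G : SimpleGraph V} (H : G.Subgraph) : Prop :=
  H.Connected ∧ H.coe.IsAcyclic

/-- `nk G k` : the number of subtrees of `G` with exactly `k` vertices. -/
noncomputable def nk {V : Type*} (G : SimpleGraph V) (k : ℕ) : ℕ :=
  Nat.card {H : G.Subgraph // IsSubtree H ∧ H.verts.ncard = k}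

/-- number of `k`-vertex subtrees of `G` containing the vertex `v`. -/
noncomputable def nkAt {V : Type*} (G : SimpleGraph V) (v : V) (k : ℕ) : ℕ :=
  Nat.card {H : G.Subgraph // IsSubtree H ∧ v ∈ H.verts ∧ H.verts.ncard = k}

/-- `nT G` : total number of subtrees of `G`, counting the empty subtree once. -/
noncomputable def nT {V : Type*} (G : SimpleGraph V) : ℕ :=
  1 + Nat.card {H : G.Subgraph // IsSubtree H}

/-- number of subtrees of `G` containing the vertex `v`. -/
noncomputable def nAt {V : Type*} (G : SimpleGraph V) (v : V) : ℕ :=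
  Nat.card {H : G.Subgraph // IsSubtree H ∧ v ∈ H.verts}

/-- the path on `n` vertices `0 - 1 - ⋯ - (n-1)`. -/
def pathG (n : ℕ) : SimpleGraph (Fin n) :=
  SimpleGraph.fromRel (fun u v => v.val = u.val + 1)

/-- the cycle on `n` vertices. -/
def cycG (n : ℕ) : SimpleGraph (Fin n) :=
  SimpleGraph.fromRel (fun u v => v.val = u.val + 1 ∨ (u.val = 0 ∧ v.val + 1 = n))

/-- the star on `n` vertices with center `0`. -/
def starG (n : ℕ) : SimpleGraph (Fin n) :=
  SimpleGraph.fromRel (fun u _ => u.val = 0)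

/-- `USnl n l` : the cycle `C_l` (on `0,…,l-1`) with `n - l` pendant vertices attached
to the vertex `0`. -/
def USnl (n l : ℕ) : SimpleGraph (Fin n) :=
  SimpleGraph.fromRel (fun u v =>
    (v.val = u.val + 1 ∧ v.val < l) ∨ (u.val = 0 ∧ v.val + 1 = l) ∨ (u.val = 0 ∧ l ≤ v.val))

/-- `UPnl n l` : the cycle `C_l` (on `0,…,l-1`) with a pendant path of length `n - l`
attached to the vertex `l-1`. -/
def UPnl (n l : ℕ) : SimpleGraph (Fin n) :=
  SimpleGraph.fromRel (fun u v => v.val = u.val + 1 ∨ (u.val = 0 ∧ v.val + 1 = l))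

/-- `US_n` : the star `S_n` together with an edge joining two of its leaves. -/
def USn (n : ℕ) : SimpleGraph (Fin n) := USnl n 3

/-- `UP_n` : a triangle with a pendant path, obtained by identifying a vertex of `C_3`
with an end of `P_{n-2}`. -/
def UPn (n : ℕ) : SimpleGraph (Fin n) := UPnl n 3

/-- the Merrifield–Simmons index: the number of independent vertex subsets
(including the empty set). -/
noncomputable def sigmaG {V : Type*} (G : SimpleGraph V) : ℕ :=
  Nat.card {s : Set V // ∀ u ∈ s, ∀ v ∈ s, ¬ G.Adj u v}

/-- the Hosoya index: the number of matchings (including the empty one). -/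
noncomputable def hosoya {V : Type*} (G : SimpleGraph V) : ℕ :=
  Nat.card {s : Set (Sym2 V) // s ⊆ G.edgeSet ∧
    s.Pairwise (fun e f => ∀ v, ¬(v ∈ e ∧ v ∈ f))}

/-- the Wiener index: the sum of the distances over all unordered pairs of vertices. -/
noncomputable def wiener {V : Type*} [Fintype V] (G : SimpleGraph V) : ℕ :=
  (∑ u : V, ∑ v : V, G.dist u v) / 2

/-!
A subtree is grown from a single vertex by adding leaves, and deleting a leaf undoes the last step.

If `G'` arises from `G` by attaching a pendant vertex `w` at `v`, then adding and deleting `w`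
matches the subtrees of `G'` that contain `v` but not `w` with those that contain both, while the
only subtree containing `w` but not `v` is `{w}`. Hence `n(G') = n(G) + n_v(G) + 1` and
`n_v(G') = 2 n_v(G)`.

The subtrees of `C_l` are its `l²` arcs, one for each starting point and each number of edges
`k < l`. Exactly `k + 1` of the arcs with `k` edges contain a given vertex, which gives
`n_v(C_l) = 1 + ⋯ + l`. The values for `US_n` follow by attaching `n - 3` pendant vertices to `C_3`.
-/

section Growth

variable {V : Type*} {G : SimpleGraph V} {H : G.Subgraph} {v w : V}

lemma isAcyclic_of_induce {s : Set V} (hs : ∀ v ∉ s, (G.neighborSet v).Subsingleton)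
    (h : (G.induce s).IsAcyclic) : G.IsAcyclic := by
  classical
  intro u c hc
  have hcs : ∀ v ∈ c.support, v ∈ s := by
    by_contra! ⟨v, hvc, hvs⟩
    have hc' := hc.rotate hvc
    exact hc'.snd_ne_penultimate <| hs v hvs (Walk.adj_snd hc'.not_nil)
      (Walk.adj_penultimate hc'.not_nil).symm
  refine h (c.induce s hcs) ?_
  rwa [← Walk.isCycle_map_iff_of_injective (f := (Embedding.induce s).toHom)
    (Embedding.induce (G := G) s).injective, Walk.map_induce]

lemma isSubtree_singletonSubgraph (v : V) : IsSubtree (G.singletonSubgraph v) :=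
  ⟨Subgraph.singletonSubgraph_connected, (IsTree.coe_singletonSubgraph G v).isAcyclic⟩

lemma deleteVerts_sup_subgraphOfAdj (hvw : G.Adj v w) (hv : v ∈ H.verts) (hw : w ∉ H.verts) :
    (H ⊔ G.subgraphOfAdj hvw).deleteVerts {w} = H := by
  ext x y
  · simp only [Subgraph.deleteVerts_verts, Subgraph.verts_sup, subgraphOfAdj_verts]
    grind
  · simp only [Subgraph.deleteVerts_adj, Subgraph.sup_adj, subgraphOfAdj_adj, Subgraph.verts_sup,
      subgraphOfAdj_verts]
    grind [Subgraph.Adj.fst_mem, Subgraph.Adj.snd_mem]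

lemma deleteVerts_sup_subgraphOfAdj_self (hvw : H.Adj v w) (hw : ∀ x, H.Adj w x → x = v) :
    H.deleteVerts {w} ⊔ G.subgraphOfAdj hvw.adj_sub = H := by
  ext x y
  · simp only [Subgraph.deleteVerts_verts, Subgraph.verts_sup, subgraphOfAdj_verts]
    grind [Subgraph.Adj.fst_mem, Subgraph.Adj.snd_mem]
  · simp only [Subgraph.deleteVerts_adj, Subgraph.sup_adj, subgraphOfAdj_adj]
    grind [Subgraph.Adj.fst_mem, Subgraph.Adj.snd_mem, Subgraph.adj_comm]

namespace IsSubtree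

lemma isTree_coe (hH : IsSubtree H) : H.coe.IsTree := ⟨hH.1.coe, hH.2⟩

lemma sup_subgraphOfAdj (hH : IsSubtree H) (hvw : G.Adj v w) (hv : v ∈ H.verts)
    (hw : w ∉ H.verts) : IsSubtree (H ⊔ G.subgraphOfAdj hvw) := by
  refine ⟨Subgraph.connected_sup hH.1.preconnected
    (Subgraph.subgraphOfAdj_connected hvw).preconnected ⟨v, by simp [hv]⟩, ?_⟩
  have hdel : ((H ⊔ G.subgraphOfAdj hvw).deleteVerts {w}).coe.IsAcyclic := by
    rw [deleteVerts_sup_subgraphOfAdj hvw hv hw]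
    exact hH.2
  refine isAcyclic_of_induce ?_ ((Subgraph.coeDeleteVertsIso {w}).isAcyclic_iff.1 hdel)
  have hadj : ∀ x, (H ⊔ G.subgraphOfAdj hvw).Adj w x → x = v := by
    simp only [Subgraph.sup_adj, subgraphOfAdj_adj]
    grind [Subgraph.Adj.fst_mem]
  rintro ⟨u, _⟩ hu ⟨x, _⟩ hx ⟨y, _⟩ hy
  obtain rfl : u = w := by simpa using hu
  exact Subtype.ext ((hadj x hx).trans (hadj y hy).symm)

lemma deleteVerts_leaf (hH : IsSubtree H) (hvw : H.Adj v w) (hw : ∀ x, H.Adj w x → x = v) :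
    IsSubtree (H.deleteVerts {w}) := by
  refine ⟨⟨?_⟩, (Subgraph.coeDeleteVertsIso {w}).isAcyclic_iff.2 (hH.2.induce _)⟩
  have : Nonempty (H.deleteVerts {w}).verts := ⟨v, hvw.fst_mem, hvw.ne⟩
  refine ⟨(Subgraph.coeDeleteVertsIso {w}).preconnected_iff.2 ?_⟩
  refine hH.1.coe.preconnected.induce_of_degree_eq_one ?_
  rintro ⟨u, _⟩ hu ⟨x, _⟩ hx ⟨y, _⟩ hy
  obtain rfl : u = w := by simpa using hu
  exact Subtype.ext ((hw x hx).trans (hw y hy).symm)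

theorem induction_on [Finite V] {motive : G.Subgraph → Prop} (hH : IsSubtree H)
    (singleton : ∀ v, motive (G.singletonSubgraph v))
    (grow : ∀ (H : G.Subgraph) (v w : V) (hvw : G.Adj v w), v ∈ H.verts → w ∉ H.verts →
      motive H → motive (H ⊔ G.subgraphOfAdj hvw)) : motive H := by
  classical
  induction hn : H.verts.ncard using Nat.strong_induction_on generalizing H with | _ n ih
  rcases H.verts.subsingleton_or_nontrivial with hs | hs
  · obtain ⟨v, hv⟩ := hH.1.nonempty
    rw [(eq_singletonSubgraph_iff_verts_eq H).2 (hs.eq_singleton_of_mem hv)]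
    exact singleton v
  · have := hs.coe_sort
    have := Fintype.ofFinite H.verts
    obtain ⟨⟨w, hwH⟩, hdeg⟩ := hH.isTree_coe.exists_vert_degree_one_of_nontrivial
    rw [Subgraph.coe_degree, Subgraph.degree_eq_one_iff_existsUnique_adj] at hdeg
    obtain ⟨v, hwv, hv⟩ := hdeg
    have hvw : H.Adj v w := H.adj_symm hwv
    rw [← deleteVerts_sup_subgraphOfAdj_self hvw hv]
    refine grow _ v w _ ⟨hvw.fst_mem, hvw.ne⟩ (fun h ↦ h.2 rfl)
      (ih _ ?_ (hH.deleteVerts_leaf hvw hv) rfl)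
    simpa [← hn] using Set.ncard_sdiff_singleton_lt_of_mem hwH

end IsSubtree

end Growth

section Embedding

variable {V W : Type*} {G : SimpleGraph V} {G' : SimpleGraph W}

lemma isSubtree_map_iff {f : G →g G'} (hf : Function.Injective f) {H : G.Subgraph} :
    IsSubtree (H.map f) ↔ IsSubtree H := by
  let e : H.coe ≃g (H.map f).coe :=
    { toEquiv := Equiv.Set.image f H.verts hf
      map_rel_iff' := by
        rintro ⟨x, _⟩ ⟨y, _⟩
        exact Relation.map_apply_apply hf hf .. }
  rw [IsSubtree, IsSubtree, Subgraph.connected_iff', Subgraph.connected_iff', e.connected_iff,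
    e.isAcyclic_iff]

lemma subgraph_comap_map (f : G ↪g G') (H : G.Subgraph) : (H.map f.toHom).comap f.toHom = H := by
  ext x y
  · simp
  · simpa [Relation.map_apply_apply f.injective f.injective] using fun h ↦ h.adj_sub

lemma subgraph_map_comap (f : G ↪g G') {K : G'.Subgraph} (hK : K.verts ⊆ Set.range f) :
    (K.comap f.toHom).map f.toHom = K := by
  ext x y
  · simpa [Set.image_preimage_eq_inter_range] using @hK x
  · refine ⟨?_, fun h ↦ ?_⟩
    · rintro ⟨x, y, h, rfl, rfl⟩
      exact h.2
    · obtain ⟨x, rfl⟩ := hK h.fst_mem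
      obtain ⟨y, rfl⟩ := hK h.snd_mem
      exact ⟨x, y, ⟨f.map_adj_iff.1 h.adj_sub, h⟩, rfl, rfl⟩

end Embedding

section Counting

variable {V : Type*} (G : SimpleGraph V) (v : V)

lemma nT_eq_ncard : nT G = 1 + {H : G.Subgraph | IsSubtree H}.ncard :=
  congrArg (1 + ·) (Nat.card_coe_set_eq _)

lemma nAt_eq_ncard : nAt G v = {H : G.Subgraph | IsSubtree H ∧ v ∈ H.verts}.ncard :=
  Nat.card_coe_set_eq _

lemma ncard_isSubtree_mem_add_ncard_isSubtree_notMem [Finite V] (p : G.Subgraph → Prop) :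
    {H | IsSubtree H ∧ p H ∧ v ∈ H.verts}.ncard + {H | IsSubtree H ∧ p H ∧ v ∉ H.verts}.ncard =
      {H | IsSubtree H ∧ p H}.ncard := by
  rw [← Set.ncard_inter_add_ncard_sdiff_eq_ncard {H | IsSubtree H ∧ p H} {H | v ∈ H.verts}]
  congr 2 <;> ext <;> simp [and_assoc]

end Counting

section Pendant

variable {V : Type*} {G : SimpleGraph V} {v w : V}

lemma setOf_isSubtree_mem_leaf_mem (hw : ∀ x, G.Adj w x ↔ x = v) :
    {K : G.Subgraph | IsSubtree K ∧ v ∈ K.verts ∧ w ∈ K.verts} =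
      (· ⊔ G.subgraphOfAdj ((hw v).2 rfl).symm) ''
        {K | IsSubtree K ∧ v ∈ K.verts ∧ w ∉ K.verts} := by
  have hvw : G.Adj v w := ((hw v).2 rfl).symm
  ext K
  refine ⟨fun ⟨hK, hvK, hwK⟩ ↦ ?_, ?_⟩
  · have : Nontrivial K.verts := Set.Nontrivial.coe_sort ⟨v, hvK, w, hwK, hvw.ne⟩
    obtain ⟨x, (hx : K.Adj w x)⟩ := hK.1.preconnected.exists_adj_of_nontrivial ⟨w, hwK⟩
    obtain rfl := (hw x).1 hx.adj_sub
    have hleaf : ∀ y, K.Adj w y → y = x := fun y hy ↦ (hw y).1 hy.adj_sub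
    exact ⟨K.deleteVerts {w}, ⟨hK.deleteVerts_leaf hx.symm hleaf, ⟨hvK, hvw.ne⟩, fun h ↦ h.2 rfl⟩,
      deleteVerts_sup_subgraphOfAdj_self hx.symm hleaf⟩
  · rintro ⟨K, ⟨hK, hvK, hwK⟩, rfl⟩
    exact ⟨hK.sup_subgraphOfAdj hvw hvK hwK, by simp, by simp⟩

lemma ncard_isSubtree_mem_leaf_mem (hw : ∀ x, G.Adj w x ↔ x = v) :
    {K : G.Subgraph | IsSubtree K ∧ v ∈ K.verts ∧ w ∈ K.verts}.ncard =
      {K : G.Subgraph | IsSubtree K ∧ v ∈ K.verts ∧ w ∉ K.verts}.ncard := by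
  rw [setOf_isSubtree_mem_leaf_mem hw]
  refine Set.InjOn.ncard_image fun K hK L hL h ↦ ?_
  rw [← deleteVerts_sup_subgraphOfAdj ((hw v).2 rfl).symm hK.2.1 hK.2.2, h,
    deleteVerts_sup_subgraphOfAdj _ hL.2.1 hL.2.2]

lemma setOf_isSubtree_notMem_leaf_mem (hw : ∀ x, G.Adj w x ↔ x = v) :
    {K : G.Subgraph | IsSubtree K ∧ v ∉ K.verts ∧ w ∈ K.verts} = {G.singletonSubgraph w} := by
  ext K
  refine ⟨fun ⟨hK, hvK, hwK⟩ ↦ ?_, ?_⟩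
  · by_contra hne
    rw [Set.mem_singleton_iff, eq_singletonSubgraph_iff_verts_eq] at hne
    have := ((Set.nontrivial_iff_ne_singleton hwK).2 hne).coe_sort
    obtain ⟨x, (hx : K.Adj w x)⟩ := hK.1.preconnected.exists_adj_of_nontrivial ⟨w, hwK⟩
    exact hvK ((hw x).1 hx.adj_sub ▸ hx.snd_mem)
  · rintro rfl
    exact ⟨isSubtree_singletonSubgraph w, ((hw v).2 rfl).ne', rfl⟩

end Pendant

/-- `G'` arises from `G`, embedded by `f`, by attaching the pendant vertex `w` at the vertex `v`. -/
structure IsPendantExtension {V W : Type*} {G : SimpleGraph V} {G' : SimpleGraph W}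
    (f : G ↪g G') (v : V) (w : W) : Prop where
  range_eq : Set.range f = {w}ᶜ
  adj_iff : ∀ x, G'.Adj w x ↔ x = f v

namespace IsPendantExtension

variable {V W : Type*} {G : SimpleGraph V} {G' : SimpleGraph W} {f : G ↪g G'} {v : V} {w : W}

lemma image_map_setOf_isSubtree (h : IsPendantExtension f v w) (p : G'.Subgraph → Prop) :
    Subgraph.map f.toHom '' {H | IsSubtree H ∧ p (H.map f.toHom)} =
      {K | IsSubtree K ∧ p K ∧ w ∉ K.verts} := by
  ext K
  refine ⟨?_, fun ⟨hK, hp, hwK⟩ ↦ ?_⟩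
  · rintro ⟨H, ⟨hH, hp⟩, rfl⟩
    refine ⟨(isSubtree_map_iff f.injective).2 hH, hp, ?_⟩
    rintro ⟨x, -, hx⟩
    exact (h.range_eq ▸ Set.mem_range_self x : f x ∈ ({w}ᶜ : Set W)) hx
  · have hmap : (K.comap f.toHom).map f.toHom = K :=
      subgraph_map_comap f (h.range_eq ▸ Set.subset_compl_singleton_iff.2 hwK)
    refine ⟨K.comap f.toHom, ⟨?_, hmap.symm ▸ hp⟩, hmap⟩
    rwa [← isSubtree_map_iff (f := f.toHom) f.injective, hmap]

lemma ncard_setOf_isSubtree (h : IsPendantExtension f v w) (p : G'.Subgraph → Prop) :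
    {K | IsSubtree K ∧ p K ∧ w ∉ K.verts}.ncard =
      {H | IsSubtree H ∧ p (H.map f.toHom)}.ncard := by
  rw [← h.image_map_setOf_isSubtree]
  exact Set.ncard_image_of_injective _ (Function.LeftInverse.injective (subgraph_comap_map f))

lemma ncard_isSubtree_mem_notMem (h : IsPendantExtension f v w) :
    {K : G'.Subgraph | IsSubtree K ∧ f v ∈ K.verts ∧ w ∉ K.verts}.ncard = nAt G v := by
  rw [h.ncard_setOf_isSubtree, nAt_eq_ncard]
  simp

variable [Finite W]

lemma nAt_eq (h : IsPendantExtension f v w) : nAt G' (f v) = 2 * nAt G v := by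
  rw [nAt_eq_ncard, ← ncard_isSubtree_mem_add_ncard_isSubtree_notMem G' w,
    ncard_isSubtree_mem_leaf_mem h.adj_iff, h.ncard_isSubtree_mem_notMem, two_mul]

lemma nT_eq (h : IsPendantExtension f v w) : nT G' = nT G + nAt G v + 1 := by
  have hnotMem : {K : G'.Subgraph | IsSubtree K ∧ w ∉ K.verts}.ncard =
      {H : G.Subgraph | IsSubtree H}.ncard := by
    simpa using h.ncard_setOf_isSubtree fun _ ↦ True
  have hmem : {K : G'.Subgraph | IsSubtree K ∧ w ∈ K.verts}.ncard = nAt G v + 1 := by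
    rw [← ncard_isSubtree_mem_add_ncard_isSubtree_notMem G' (f v)]
    simp only [and_comm (a := w ∈ _), setOf_isSubtree_notMem_leaf_mem h.adj_iff,
      ncard_isSubtree_mem_leaf_mem h.adj_iff, h.ncard_isSubtree_mem_notMem, Set.ncard_singleton]
  have hsplit := ncard_isSubtree_mem_add_ncard_isSubtree_notMem G' w fun _ ↦ True
  simp only [true_and, and_true] at hsplit
  rw [nT_eq_ncard, nT_eq_ncard, ← hsplit, hmem, hnotMem]
  ring

end IsPendantExtension

section Cycle

variable {n : ℕ} {i v : Fin (n + 3)} {k : ℕ}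

lemma val_add_one_sub (h : v + 1 ≠ i) : (v + 1 - i).val = (v - i).val + 1 := by
  have hne : v + 1 - i ≠ 0 := sub_ne_zero.2 h
  have := Fin.val_sub_one_of_ne_zero hne
  have := Fin.val_ne_zero_iff.2 hne
  rw [add_sub_right_comm, add_sub_cancel_right] at *
  lia

lemma val_sub_add_one_self (i : Fin (n + 3)) : (i - (i + 1)).val = n + 2 := by
  rw [sub_add_cancel_left, Fin.coe_neg_one]

lemma add_one_ne_of_val_sub_lt (h : (v - i).val + 1 < n + 3) : v + 1 ≠ i := by
  rintro rfl
  rw [val_sub_add_one_self] at h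
  lia

/-- The arc of the cycle with `k` edges that starts at `i` and runs in the direction of increasing
labels. It is a path for `k < n + 3`; the whole cycle, reached for `k ≥ n + 3`, is not a tree. -/
def cycleArc (i : Fin (n + 3)) (k : ℕ) : (cycleGraph (n + 3)).Subgraph where
  verts := {v | (v - i).val ≤ k}
  Adj u v := v = u + 1 ∧ (u - i).val < k ∨ u = v + 1 ∧ (v - i).val < k
  adj_sub := by
    rintro u v (⟨rfl, -⟩ | ⟨rfl, -⟩) <;> simp [cycleGraph_adj]
  edge_vert := by
    rintro u v (⟨rfl, h⟩ | ⟨rfl, h⟩)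
    · exact h.le
    · rcases eq_or_ne (v + 1) i with rfl | hne
      · simp
      · exact (val_add_one_sub hne).trans_le h
  symm.symm _ _ := Or.symm

lemma mem_verts_cycleArc : v ∈ (cycleArc i k).verts ↔ (v - i).val ≤ k := Iff.rfl

lemma cycleArc_adj {u : Fin (n + 3)} : (cycleArc i k).Adj u v ↔
    v = u + 1 ∧ (u - i).val < k ∨ u = v + 1 ∧ (v - i).val < k := Iff.rfl

lemma cycleArc_zero (i : Fin (n + 3)) :
    cycleArc i 0 = (cycleGraph (n + 3)).singletonSubgraph i := by
  rw [eq_singletonSubgraph_iff_verts_eq]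
  ext v
  simp [mem_verts_cycleArc, sub_eq_zero]

lemma cycleArc_sup_next (hk : k + 1 < n + 3) (hv : (v - i).val = k)
    (h : (cycleGraph (n + 3)).Adj v (v + 1)) :
    cycleArc i k ⊔ (cycleGraph (n + 3)).subgraphOfAdj h = cycleArc i (k + 1) := by
  have hv_iff (x : Fin (n + 3)) : (x - i).val = k ↔ x = v := by
    rw [← hv, Fin.val_inj, sub_left_inj]
  have hv_iff' (x : Fin (n + 3)) : (x - i).val = k + 1 ↔ x = v + 1 := by
    rw [← hv, ← val_add_one_sub (add_one_ne_of_val_sub_lt (hv ▸ hk)), Fin.val_inj, sub_left_inj]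
  ext x y
  · simp only [Subgraph.verts_sup, subgraphOfAdj_verts, Set.mem_union, mem_verts_cycleArc]
    grind
  · simp only [Subgraph.sup_adj, subgraphOfAdj_adj, cycleArc_adj]
    grind

lemma cycleArc_sup_prev (hk : k + 1 < n + 3) (h : (cycleGraph (n + 3)).Adj (i + 1) i) :
    cycleArc (i + 1) k ⊔ (cycleGraph (n + 3)).subgraphOfAdj h = cycleArc i (k + 1) := by
  have hval (x : Fin (n + 3)) (hx : x ≠ i) : (x - i).val = (x - (i + 1)).val + 1 := by
    simpa [sub_sub, add_comm] using val_add_one_sub (v := x - 1) (i := i) (by simpa)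
  have hval_self := val_sub_add_one_self i
  have hzero (x : Fin (n + 3)) : x - i = 0 ↔ x = i := sub_eq_zero
  ext x y
  · simp only [Subgraph.verts_sup, subgraphOfAdj_verts, Set.mem_union, mem_verts_cycleArc]
    rcases eq_or_ne x i with rfl | hx
    · simp
    rcases eq_or_ne x (i + 1) with rfl | hx'
    · simp
    · simp [hval x hx, hx, hx']
  · simp only [Subgraph.sup_adj, subgraphOfAdj_adj, cycleArc_adj]
    grind

lemma isSubtree_cycleArc (i : Fin (n + 3)) (hk : k < n + 3) : IsSubtree (cycleArc i k) := by
  induction k with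
  | zero =>
    rw [cycleArc_zero]
    exact isSubtree_singletonSubgraph i
  | succ k ih =>
    have hval : (i + Fin.ofNat _ k - i).val = k := by
      rw [add_sub_cancel_left, Fin.val_ofNat, Nat.mod_eq_of_lt (by lia)]
    have hadj : (cycleGraph (n + 3)).Adj (i + Fin.ofNat _ k) (i + Fin.ofNat _ k + 1) := by
      simp [cycleGraph_adj]
    rw [← cycleArc_sup_next hk hval hadj]
    refine (ih (by lia)).sup_subgraphOfAdj hadj hval.le ?_
    rw [mem_verts_cycleArc, val_add_one_sub (add_one_ne_of_val_sub_lt (by lia)), hval]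
    lia

lemma IsSubtree.exists_eq_cycleArc {H : (cycleGraph (n + 3)).Subgraph} (hH : IsSubtree H) :
    ∃ i, ∃ k < n + 3, H = cycleArc i k := by
  refine hH.induction_on (motive := fun H ↦ ∃ i, ∃ k < n + 3, H = cycleArc i k)
    (fun v ↦ ⟨v, 0, by lia, (cycleArc_zero v).symm⟩) ?_
  rintro _ v w hvw hv hw ⟨i, k, hk, rfl⟩
  rw [mem_verts_cycleArc] at hv hw
  have hwi := (w - i).isLt
  rcases cycleGraph_adj.1 hvw with h | h
  · obtain rfl : v = w + 1 := sub_eq_iff_eq_add'.1 h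
    obtain rfl : w + 1 = i := by
      by_contra hne
      rw [val_add_one_sub hne] at hv
      lia
    exact ⟨w, k + 1, by lia, cycleArc_sup_prev (by lia) hvw⟩
  · obtain rfl : w = v + 1 := sub_eq_iff_eq_add'.1 h
    have hne : v + 1 ≠ i := by
      rintro rfl
      simp at hw
    rw [val_add_one_sub hne] at hw hwi
    exact ⟨i, k + 1, by lia, cycleArc_sup_next (by lia) (by lia) hvw⟩

lemma cycleArc_adj_add_one_iff (hk : k < n + 3) (hv : v + 1 ∈ (cycleArc i k).verts) :
    (cycleArc i k).Adj v (v + 1) ↔ v + 1 ≠ i := by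
  have hne : v ≠ v + 1 + 1 := by
    simp [add_assoc, Fin.ext_iff, Fin.val_add, Nat.mod_eq_of_lt]
  simp only [cycleArc_adj, hne, true_and, false_and, or_false]
  constructor
  · rintro hlt rfl
    rw [val_sub_add_one_self] at hlt
    lia
  · intro h
    rwa [mem_verts_cycleArc, val_add_one_sub h] at hv

lemma cycleArc_injective :
    Function.Injective fun p : Fin (n + 3) × Fin (n + 3) ↦ cycleArc p.1 p.2 := by
  rintro ⟨i, k⟩ ⟨j, l⟩ (h : cycleArc i k = cycleArc j l)
  obtain ⟨v, rfl⟩ : ∃ v, v + 1 = i := ⟨i - 1, sub_add_cancel i 1⟩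
  have hv : v + 1 ∈ (cycleArc (v + 1) k).verts := by simp [mem_verts_cycleArc]
  obtain rfl : v + 1 = j := by
    have hnadj : ¬ (cycleArc (v + 1) k).Adj v (v + 1) := by simp [cycleArc_adj_add_one_iff k.2 hv]
    rw [h] at hv hnadj
    rwa [cycleArc_adj_add_one_iff l.2 hv, not_not] at hnadj
  have hmem (m : Fin (n + 3)) : m ≤ k ↔ m ≤ l := by
    simpa [mem_verts_cycleArc] using Set.ext_iff.1 (congrArg Subgraph.verts h) (v + 1 + m)
  rw [le_antisymm ((hmem k).1 le_rfl) ((hmem l).2 le_rfl)]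

lemma setOf_isSubtree_cycleGraph :
    {H : (cycleGraph (n + 3)).Subgraph | IsSubtree H} =
      Set.range fun p : Fin (n + 3) × Fin (n + 3) ↦ cycleArc p.1 p.2 := by
  ext H
  refine ⟨fun hH ↦ ?_, ?_⟩
  · obtain ⟨i, k, hk, rfl⟩ := IsSubtree.exists_eq_cycleArc hH
    exact ⟨(i, ⟨k, hk⟩), rfl⟩
  · rintro ⟨⟨i, k⟩, rfl⟩
    exact isSubtree_cycleArc i k.2

lemma nT_cycleGraph {n : ℕ} (hn : 3 ≤ n) : nT (cycleGraph n) = n ^ 2 + 1 := by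
  obtain ⟨m, rfl⟩ := Nat.exists_eq_add_of_le' hn
  rw [nT_eq_ncard, setOf_isSubtree_cycleGraph, Set.ncard_range_of_injective cycleArc_injective,
    Nat.card_prod, Nat.card_fin, sq, add_comm]

lemma nAt_cycleGraph {n : ℕ} (hn : 3 ≤ n) (v : Fin n) :
    nAt (cycleGraph n) v = (n + 1).choose 2 := by
  obtain ⟨m, rfl⟩ := Nat.exists_eq_add_of_le' hn
  have hset : {H : (cycleGraph (m + 3)).Subgraph | IsSubtree H ∧ v ∈ H.verts} =
      (fun p : Fin (m + 3) × Fin (m + 3) ↦ cycleArc p.1 p.2) '' {p | v - p.1 ≤ p.2} := by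
    rw [Set.ofPred_and, setOf_isSubtree_cycleGraph, Set.inter_comm,
      ← Set.image_preimage_eq_inter_range]
    rfl
  -- Sending the starting point `i` to `v - i` turns the arcs through `v` into the pairs `a ≤ b`.
  let e : {p : Fin (m + 3) × Fin (m + 3) // v - p.1 ≤ p.2} ≃ Sym2 (Fin (m + 3)) :=
    (((Equiv.subLeft v).prodCongr (Equiv.refl _)).subtypeEquiv fun _ ↦ Iff.rfl).trans
      Sym2.sortEquiv.symm
  rw [nAt_eq_ncard, hset, Set.ncard_image_of_injective _ cycleArc_injective,
    ← Nat.card_coe_set_eq]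
  exact (Nat.card_congr e).trans <| by rw [Nat.card_eq_fintype_card, Sym2.card, Fintype.card_fin]

end Cycle

section USnl

lemma val_sub_eq_one_iff {n : ℕ} (hn : 1 < n) {u v : Fin n} :
    (u - v).val = 1 ↔ u.val = v.val + 1 ∨ (u.val = 0 ∧ v.val + 1 = n) := by
  rcases le_or_gt v u with h | h
  · rw [Fin.sub_val_of_le h]
    lia
  · rw [Fin.coe_sub_iff_lt.2 h]
    lia

lemma cycG_eq_cycleGraph {n : ℕ} (hn : 1 < n) : cycG n = cycleGraph n := by
  ext u v
  simp only [cycG, fromRel_adj, cycleGraph_adj', val_sub_eq_one_iff hn, ne_eq, Fin.ext_iff]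
  lia

lemma USnl_self (l : ℕ) : USnl l l = cycG l := by
  ext u v
  simp only [USnl, cycG, fromRel_adj]
  grind

variable {n l : ℕ}

/-- The inclusion of the cycle with `n - l` pendant vertices in the one with one more pendant
vertex, which receives the label `n`. -/
def usnlCastSucc (n l : ℕ) : USnl n l ↪g USnl (n + 1) l where
  toEmbedding := Fin.castSuccEmb
  map_rel_iff' {u v} := by
    change (USnl (n + 1) l).Adj u.castSucc v.castSucc ↔ _
    simp only [USnl, fromRel_adj, ne_eq, Fin.castSucc_inj, Fin.val_castSucc]

lemma isPendantExtension_usnlCastSucc (hl : 0 < l) (hn : l ≤ n) :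
    IsPendantExtension (usnlCastSucc n l) ⟨0, by lia⟩ (Fin.last n) where
  range_eq := by
    ext x
    exact Fin.exists_castSucc_eq
  adj_iff x := by
    change (USnl (n + 1) l).Adj (Fin.last n) x ↔ x = Fin.castSucc ⟨0, by lia⟩
    simp only [USnl, fromRel_adj, Fin.ext_iff, Fin.val_last, Fin.val_castSucc, ne_eq]
    lia

lemma nAt_USnl (hl : 3 ≤ l) (p : ℕ) :
    nAt (USnl (l + p) l) ⟨0, by lia⟩ = 2 ^ p * (l + 1).choose 2 := by
  induction p with
  | zero => simp [USnl_self, cycG_eq_cycleGraph (by lia : 1 < l), nAt_cycleGraph hl]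
  | succ p ih =>
    have h := (isPendantExtension_usnlCastSucc (by lia : 0 < l) (l.le_add_right p)).nAt_eq
    rw [pow_succ', mul_assoc, ← ih]
    exact h

lemma nT_USnl (hl : 3 ≤ l) (p : ℕ) :
    nT (USnl (l + p) l) + (l + 1).choose 2 = l ^ 2 + 1 + 2 ^ p * (l + 1).choose 2 + p := by
  induction p with
  | zero => simp [USnl_self, cycG_eq_cycleGraph (by lia : 1 < l), nT_cycleGraph hl]
  | succ p ih =>
    have h := (isPendantExtension_usnlCastSucc (by lia : 0 < l) (l.le_add_right p)).nT_eq
    rw [nAt_USnl hl] at h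
    rw [← add_assoc, h, pow_succ' 2, mul_assoc]
    lia

end USnl

lemma add_three_sq_le (p : ℕ) : (p + 3) ^ 2 ≤ 6 * 2 ^ p + p + 3 := by
  induction p with
  | zero => norm_num
  | succ p ih =>
    have := p.lt_two_pow_self
    calc (p + 1 + 3) ^ 2 = (p + 3) ^ 2 + (2 * p + 7) := by ring
      _ ≤ 6 * 2 ^ (p + 1) + (p + 1) + 3 := by lia

/-- for `n ≥ 4`, `n(US_n) = 2^{n-1} + 2^{n-2} + n + 1 ≥ n² + 1 = n(C_n)`. -/
theorem nT_USn (n : ℕ) (hn : 4 ≤ n) :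
    nT (USn n) = 2 ^ (n - 1) + 2 ^ (n - 2) + n + 1 ∧
    nT (cycG n) = n ^ 2 + 1 ∧
    n ^ 2 + 1 ≤ 2 ^ (n - 1) + 2 ^ (n - 2) + n + 1 := by
  obtain ⟨p, rfl⟩ := Nat.exists_eq_add_of_le (by lia : 3 ≤ n)
  have hpow : 2 ^ (3 + p - 1) + 2 ^ (3 + p - 2) = 6 * 2 ^ p := by
    rw [show 3 + p - 1 = p + 2 by lia, show 3 + p - 2 = p + 1 by lia]
    ring
  rw [hpow]
  refine ⟨?_, ?_, ?_⟩
  · have hUS : nT (USn (3 + p)) + 6 = 10 + 2 ^ p * 6 + p := nT_USnl le_rfl p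
    lia
  · rw [cycG_eq_cycleGraph (by lia), nT_cycleGraph (by lia)]
  · have := add_three_sq_le p
    grind
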